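/- Let G be a graph on [n] with λ₂(L(G)) ≥ k, for some 1 ≤ k ≤ ⌊n/2⌋. Then λ₂(L_k(G)) = λ₂(L(G)), i.e., the algebraic connectivity of the k-th token graph equals that of G. -/

import Mathlib

open Finset

/-- The `k`-th token graph of a graph `G` on `[n]` = `Fin n`: vertices are the `k`-subsets of
`[n]`, and `A, B` are adjacent iff `|A ∩ B| = k - 1` and `A △ B` is an edge of `G`. -/
def tokenGraph (n k : ℕ) (G : SimpleGraph (Fin n)) :
    SimpleGraph {s : Finset (Fin n) // s.card = k} :=
  SimpleGraph.fromRel (fun A B =>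
    (A.1 ∩ B.1).card = k - 1 ∧ ∃ u v, G.Adj u v ∧ symmDiff A.1 B.1 = {u, v})

noncomputable instance (n k : ℕ) (G : SimpleGraph (Fin n)) :
    DecidableRel (tokenGraph n k G).Adj := Classical.decRel _

/-- Laplacian matrix of the `k`-th token graph. -/
noncomputable def lapTok (n k : ℕ) (G : SimpleGraph (Fin n)) :
    Matrix {s : Finset (Fin n) // s.card = k} {s : Finset (Fin n) // s.card = k} ℝ :=
  SimpleGraph.lapMatrix ℝ (tokenGraph n k G)

/-- The second smallest eigenvalue (with multiplicity) of a Hermitian real matrix: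
the infimum over pairs of distinct indices of the larger of the two corresponding
eigenvalues. -/
noncomputable def lamSecond {V : Type*} [Fintype V] [DecidableEq V] {M : Matrix V V ℝ}
    (hM : M.IsHermitian) : ℝ :=
  sInf {y : ℝ | ∃ i j : V, i ≠ j ∧ y = max (hM.eigenvalues i) (hM.eigenvalues j)}

/-!
Let `sumInsert` take a function of `(k + 1)`-sets to the function of `k`-sets that sums it over all
one-element extensions. It commutes with the token Laplacians, so a `μ`-eigenvector of `L_{k+1}(G)`
either descends to a `μ`-eigenvector of `L_k(G)` or is killed. If it is killed, its restriction to
the extensions of any `k`-set sums to zero, so the spectral gap of `G` applies to it; summing over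
all `k`-sets gives `(k + 1) * (λ₂ - k) ≤ μ`, and the left-hand side is at least `λ₂` as soon as
`λ₂ ≥ k + 1`. Hence `λ₂(L_k(G)) ≥ λ₂(L(G))`. Conversely, `A ↦ ∑ a ∈ A, f a` lifts eigenvectors of
`L(G)` to eigenvectors of `L_k(G)` with the same eigenvalue.
-/

section SecondEigenvalue

open Matrix

variable {V : Type*} [Fintype V] [DecidableEq V] {M : Matrix V V ℝ}

theorem finite_setOf_max_eigenvalues (hM : M.IsHermitian) :
    {y : ℝ | ∃ i j, i ≠ j ∧ y = max (hM.eigenvalues i) (hM.eigenvalues j)}.Finite := by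
  refine (Set.finite_range fun p : V × V ↦
    max (hM.eigenvalues p.1) (hM.eigenvalues p.2)).subset ?_
  rintro _ ⟨i, j, -, rfl⟩
  exact ⟨(i, j), rfl⟩

theorem lamSecond_le_max_eigenvalues (hM : M.IsHermitian) {i j : V} (hij : i ≠ j) :
    lamSecond hM ≤ max (hM.eigenvalues i) (hM.eigenvalues j) :=
  csInf_le (finite_setOf_max_eigenvalues hM).bddBelow ⟨i, j, hij, rfl⟩

theorem exists_eigenvalues_le_eq_lamSecond [Nontrivial V] (hM : M.IsHermitian) :
    ∃ i j, i ≠ j ∧ hM.eigenvalues i ≤ hM.eigenvalues j ∧ hM.eigenvalues j = lamSecond hM := by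
  obtain ⟨a, b, hab⟩ := exists_pair_ne V
  obtain ⟨i, j, hij, hmax⟩ : lamSecond hM ∈ {y : ℝ | ∃ i j, i ≠ j ∧
      y = max (hM.eigenvalues i) (hM.eigenvalues j)} :=
    Set.Nonempty.csInf_mem ⟨_, a, b, hab, rfl⟩ (finite_setOf_max_eigenvalues hM)
  rcases le_total (hM.eigenvalues i) (hM.eigenvalues j) with hle | hle
  · exact ⟨i, j, hij, hle, (hmax.trans (max_eq_right hle)).symm⟩
  · exact ⟨j, i, hij.symm, hle, (hmax.trans (max_eq_left hle)).symm⟩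

theorem eigenvectorBasis_dotProduct (hM : M.IsHermitian) (i j : V) :
    ⇑(hM.eigenvectorBasis i) ⬝ᵥ ⇑(hM.eigenvectorBasis j) = if i = j then 1 else 0 := by
  rw [← orthonormal_iff_ite.mp hM.eigenvectorBasis.orthonormal i j,
    EuclideanSpace.inner_eq_star_dotProduct, star_trivial, dotProduct_comm]

theorem dotProduct_eq_sum_eigenvectorBasis (hM : M.IsHermitian) (x y : V → ℝ) :
    x ⬝ᵥ y = ∑ i, (⇑(hM.eigenvectorBasis i) ⬝ᵥ x) * (⇑(hM.eigenvectorBasis i) ⬝ᵥ y) := by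
  have parseval := hM.eigenvectorBasis.sum_inner_mul_inner (WithLp.toLp 2 x) (WithLp.toLp 2 y)
  simp only [EuclideanSpace.inner_eq_star_dotProduct, star_trivial] at parseval
  simp only [dotProduct_comm x y, ← parseval, dotProduct_comm y]

theorem eigenvectorBasis_dotProduct_mulVec (hM : M.IsHermitian) (i : V) (x : V → ℝ) :
    ⇑(hM.eigenvectorBasis i) ⬝ᵥ M *ᵥ x =
      hM.eigenvalues i * (⇑(hM.eigenvectorBasis i) ⬝ᵥ x) := by
  have hMt : Mᵀ = M := by simpa using hM.eq
  rw [dotProduct_mulVec, ← mulVec_transpose, hMt, hM.mulVec_eigenvectorBasis, smul_dotProduct,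
    smul_eq_mul]

theorem dotProduct_mulVec_eq_sum_eigenvalues (hM : M.IsHermitian) (x : V → ℝ) :
    x ⬝ᵥ M *ᵥ x = ∑ i, hM.eigenvalues i * (⇑(hM.eigenvectorBasis i) ⬝ᵥ x) ^ 2 := by
  rw [dotProduct_eq_sum_eigenvectorBasis hM]
  refine sum_congr rfl fun i _ ↦ ?_
  rw [eigenvectorBasis_dotProduct_mulVec]
  ring

variable {u : V → ℝ}

theorem eigenvectorBasis_dotProduct_eq_zero (hM : M.IsHermitian) (hu : M *ᵥ u = 0) {i : V}
    (hi : hM.eigenvalues i ≠ 0) : ⇑(hM.eigenvectorBasis i) ⬝ᵥ u = 0 := by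
  have h := eigenvectorBasis_dotProduct_mulVec hM i u
  rw [hu, dotProduct_zero, eq_comm, mul_eq_zero] at h
  exact h.resolve_left hi

theorem eigenvectorBasis_dotProduct_eq_zero_of_lt_lamSecond (hM : M.PosSemidef)
    (hu : M *ᵥ u = 0) (hu0 : u ≠ 0) {x : V → ℝ} (hx : u ⬝ᵥ x = 0) {i : V}
    (hi : hM.isHermitian.eigenvalues i < lamSecond hM.isHermitian) :
    ⇑(hM.isHermitian.eigenvectorBasis i) ⬝ᵥ x = 0 := by
  -- All other eigenvalues are positive, so `u` is a multiple of the `i`-th eigenvector.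
  have hother : ∀ j ≠ i, ⇑(hM.isHermitian.eigenvectorBasis j) ⬝ᵥ u = 0 := by
    intro j hji
    have hlt := hi.trans_le (lamSecond_le_max_eigenvalues hM.isHermitian hji)
    have hij := (lt_max_iff.mp hlt).resolve_right (lt_irrefl _)
    exact eigenvectorBasis_dotProduct_eq_zero _ hu ((hM.eigenvalues_nonneg i).trans_lt hij).ne'
  have hexpand : ∀ y : V → ℝ, u ⬝ᵥ y = (⇑(hM.isHermitian.eigenvectorBasis i) ⬝ᵥ u) *
      (⇑(hM.isHermitian.eigenvectorBasis i) ⬝ᵥ y) := by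
    intro y
    rw [dotProduct_eq_sum_eigenvectorBasis hM.isHermitian]
    exact Fintype.sum_eq_single i fun j hj ↦ by rw [hother j hj, zero_mul]
  have hiu : ⇑(hM.isHermitian.eigenvectorBasis i) ⬝ᵥ u ≠ 0 := fun h ↦
    hu0 (dotProduct_self_eq_zero.mp (by rw [hexpand, h, zero_mul]))
  exact (mul_eq_zero.mp ((hexpand x).symm.trans hx)).resolve_left hiu

theorem lamSecond_mul_dotProduct_self_le (hM : M.PosSemidef) (hu : M *ᵥ u = 0) (hu0 : u ≠ 0)
    {x : V → ℝ} (hx : u ⬝ᵥ x = 0) :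
    lamSecond hM.isHermitian * (x ⬝ᵥ x) ≤ x ⬝ᵥ M *ᵥ x := by
  rw [dotProduct_mulVec_eq_sum_eigenvalues hM.isHermitian,
    dotProduct_eq_sum_eigenvectorBasis hM.isHermitian, mul_sum]
  refine sum_le_sum fun i _ ↦ ?_
  rw [← sq]
  rcases le_or_gt (lamSecond hM.isHermitian) (hM.isHermitian.eigenvalues i) with h | h
  · gcongr
  · simp [eigenvectorBasis_dotProduct_eq_zero_of_lt_lamSecond hM hu hu0 hx h]

theorem lamSecond_le_of_mulVec_eq_smul (hM : M.PosSemidef) (hu : M *ᵥ u = 0) (hu0 : u ≠ 0)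
    {x : V → ℝ} (hx : u ⬝ᵥ x = 0) (hx0 : x ≠ 0) {μ : ℝ} (hμ : M *ᵥ x = μ • x) :
    lamSecond hM.isHermitian ≤ μ := by
  have hpos : 0 < x ⬝ᵥ x := by simpa using dotProduct_star_self_pos_iff.mpr hx0
  have h := lamSecond_mul_dotProduct_self_le hM hu hu0 hx
  rw [hμ, dotProduct_smul, smul_eq_mul] at h
  exact le_of_mul_le_mul_right h hpos

theorem exists_mulVec_eq_lamSecond_smul [Nontrivial V] (hM : M.PosSemidef) (hu : M *ᵥ u = 0) :
    ∃ x ≠ 0, u ⬝ᵥ x = 0 ∧ M *ᵥ x = lamSecond hM.isHermitian • x := by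
  obtain ⟨i, j, hij, hle, hj⟩ := exists_eigenvalues_le_eq_lamSecond hM.isHermitian
  set v : V → V → ℝ := fun l ↦ ⇑(hM.isHermitian.eigenvectorBasis l)
  have hv : ∀ l, M *ᵥ v l = hM.isHermitian.eigenvalues l • v l :=
    hM.isHermitian.mulVec_eigenvectorBasis
  have hortho : ∀ l m, v l ⬝ᵥ v m = if l = m then 1 else 0 :=
    eigenvectorBasis_dotProduct hM.isHermitian
  by_cases huj : v j ⬝ᵥ u = 0
  · refine ⟨v j, fun h ↦ ?_, by rwa [dotProduct_comm], hj ▸ hv j⟩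
    simpa [h] using hortho j j
  -- The kernel then contains both eigenvectors, and a combination of them is orthogonal to `u`.
  · have hj0 : hM.isHermitian.eigenvalues j = 0 := by
      contrapose huj
      exact eigenvectorBasis_dotProduct_eq_zero _ hu huj
    have hi0 : hM.isHermitian.eigenvalues i = 0 :=
      le_antisymm (hj0 ▸ hle) (hM.eigenvalues_nonneg i)
    refine ⟨(v j ⬝ᵥ u) • v i - (v i ⬝ᵥ u) • v j, fun h ↦ huj ?_, ?_, ?_⟩
    · simpa [hortho, hij] using congrArg (v i ⬝ᵥ ·) h
    · rw [dotProduct_comm, sub_dotProduct, smul_dotProduct, smul_dotProduct, smul_eq_mul,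
        smul_eq_mul, mul_comm, sub_self]
    · simp [← hj, hj0, hi0, mulVec_sub, mulVec_smul, hv]

end SecondEigenvalue

section AlgebraicConnectivity

open Matrix

variable {V : Type*} [Fintype V] [DecidableEq V] (G : SimpleGraph V) [DecidableRel G.Adj]

/-- The algebraic connectivity `λ₂(L(G))` of a finite graph `G`; it is the junk value `0` if `G` has
fewer than two vertices. -/
noncomputable abbrev algebraicConnectivity : ℝ :=
  lamSecond (SimpleGraph.posSemidef_lapMatrix ℝ G).isHermitian

theorem lapMatrix_mulVec_apply_eq_sum_sub (f : V → ℝ) (a : V) :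
    (G.lapMatrix ℝ *ᵥ f) a = ∑ b ∈ G.neighborFinset a, (f a - f b) := by
  simp [SimpleGraph.lapMatrix_mulVec_apply, sum_sub_distrib]

theorem algebraicConnectivity_mul_dotProduct_self_le {f : V → ℝ} (hf : ∑ a, f a = 0) :
    algebraicConnectivity G * (f ⬝ᵥ f) ≤ f ⬝ᵥ G.lapMatrix ℝ *ᵥ f := by
  cases isEmpty_or_nonempty V
  · simp [dotProduct]
  · exact lamSecond_mul_dotProduct_self_le (SimpleGraph.posSemidef_lapMatrix ℝ G)
      (SimpleGraph.lapMatrix_mulVec_const_eq_zero G) one_ne_zero ((one_dotProduct f).trans hf)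

theorem algebraicConnectivity_le_of_mulVec_eq_smul {f : V → ℝ} (hf : ∑ a, f a = 0)
    (hf0 : f ≠ 0) {μ : ℝ} (hμ : G.lapMatrix ℝ *ᵥ f = μ • f) : algebraicConnectivity G ≤ μ :=
  have : Nonempty V := (Function.ne_iff.mp hf0).nonempty
  lamSecond_le_of_mulVec_eq_smul (SimpleGraph.posSemidef_lapMatrix ℝ G)
    (SimpleGraph.lapMatrix_mulVec_const_eq_zero G) one_ne_zero ((one_dotProduct f).trans hf) hf0 hμ

theorem exists_mulVec_eq_algebraicConnectivity_smul [Nontrivial V] :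
    ∃ f ≠ 0, ∑ a, f a = 0 ∧ G.lapMatrix ℝ *ᵥ f = algebraicConnectivity G • f := by
  obtain ⟨f, hf0, hf, hμ⟩ := exists_mulVec_eq_lamSecond_smul
    (SimpleGraph.posSemidef_lapMatrix ℝ G) (SimpleGraph.lapMatrix_mulVec_const_eq_zero G)
  exact ⟨f, hf0, (one_dotProduct f).symm.trans hf, hμ⟩

end AlgebraicConnectivity

section SetTransposition

open Equiv
open scoped Pointwise symmDiff

variable {V : Type*} [DecidableEq V] {a b c d : V} {A : Finset V}

theorem mem_swap_smul_finset {x : V} : x ∈ swap a b • A ↔ swap a b x ∈ A := by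
  rw [← inv_smul_mem_iff, swap_inv, Perm.smul_def]

theorem swap_smul_finset_eq_self (h : a ∈ A ↔ b ∈ A) : swap a b • A = A := by
  ext x
  rw [mem_swap_smul_finset, swap_apply_def]
  split_ifs with hxa hxb
  · rw [hxa, h]
  · rw [hxb, h]
  · rfl

theorem swap_smul_finset_eq_symmDiff (ha : a ∈ A) (hb : b ∉ A) :
    swap a b • A = A ∆ {a, b} := by
  ext x
  rw [mem_swap_smul_finset, swap_apply_def, mem_symmDiff, mem_insert, mem_singleton]
  grind

theorem eq_and_eq_of_swap_smul_finset_eq (ha : a ∈ A) (hb : b ∉ A) (hc : c ∈ A) (hd : d ∉ A)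
    (h : swap a b • A = swap c d • A) : a = c ∧ b = d := by
  rw [swap_smul_finset_eq_symmDiff ha hb, swap_smul_finset_eq_symmDiff hc hd] at h
  have hpair := symmDiff_right_injective A h
  have ha' : a ∈ ({c, d} : Finset V) := hpair ▸ mem_insert_self a {b}
  have hb' : b ∈ ({c, d} : Finset V) := hpair ▸ mem_insert_of_mem (mem_singleton_self b)
  grind

theorem mem_iff_notMem_of_card_symmDiff_pair (h : #(A ∆ {a, b}) = #A) : a ∈ A ↔ b ∉ A := by
  constructor
  · intro ha hb
    have hlt : A ∆ {a, b} ⊂ A := by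
      refine (ssubset_iff_of_subset fun x ↦ ?_).mpr ⟨a, ha, by simp [mem_symmDiff, ha]⟩
      grind [mem_symmDiff]
    exact (card_lt_card hlt).ne h
  · intro hb
    by_contra ha
    have hlt : A ⊂ A ∆ {a, b} := by
      refine (ssubset_iff_of_subset fun x ↦ ?_).mpr ⟨a, by simp [mem_symmDiff, ha], ha⟩
      grind [mem_symmDiff]
    exact (card_lt_card hlt).ne' h

theorem swap_smul_insert_finset (ha : a ∉ A) (hb : b ∉ A) :
    swap a b • insert a A = insert b A := by
  rw [smul_finset_insert, swap_smul_finset_eq_self (iff_of_false ha hb), Perm.smul_def,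
    swap_apply_left]

end SetTransposition

section SubsetSums

variable {V : Type*} [Fintype V] [DecidableEq V]

theorem sum_powersetCard_sum_compl_insert {M : Type*} [AddCommMonoid M]
    (f : V → Finset V → M) (k : ℕ) :
    ∑ S ∈ powersetCard k univ, ∑ a ∈ Sᶜ, f a (insert a S) =
      ∑ A ∈ powersetCard (k + 1) univ, ∑ a ∈ A, f a A := by
  simp only [sum_sigma']
  refine sum_bij' (fun p _ ↦ ⟨insert p.2 p.1, p.2⟩) (fun p _ ↦ ⟨p.1.erase p.2, p.2⟩)
    ?_ ?_ ?_ ?_ fun _ _ ↦ rfl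
  all_goals
    rintro ⟨S, a⟩ hS
    simp only [mem_sigma, mem_powersetCard_univ, mem_compl] at hS
    simp [hS]

omit [DecidableEq V] in
theorem sum_powersetCard_sum_eq_zero {M : Type*} [AddCommGroup M] {g : V → M}
    (hg : ∑ a, g a = 0) (k : ℕ) : ∑ A ∈ powersetCard k univ, ∑ a ∈ A, g a = 0 := by
  classical
  induction k with
  | zero => simp
  | succ k ih =>
    have hcompl : ∀ S : Finset V, ∑ a ∈ Sᶜ, g a = -∑ a ∈ S, g a := fun S ↦
      eq_neg_of_add_eq_zero_left ((sum_compl_add_sum S g).trans hg)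
    rw [← sum_powersetCard_sum_compl_insert (fun a _ ↦ g a)]
    simp only [hcompl, sum_neg_distrib, ih, neg_zero]

omit [DecidableEq V] in
theorem eq_zero_of_forall_card_eq_sum_eq_zero {M : Type*} [AddCommGroup M] [IsAddTorsionFree M]
    {g : V → M} {k : ℕ} (hk : k ≠ 0) (hkV : k < Fintype.card V)
    (hg : ∀ A : Finset V, #A = k → ∑ a ∈ A, g a = 0) : g = 0 := by
  classical
  have hconst : ∀ a b, g a = g b := by
    intro a b
    obtain ⟨S, hS, hcard⟩ := exists_subset_card_eq (s := ({a, b} : Finset V)ᶜ) (n := k - 1) (by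
      have := card_le_two (a := a) (b := b)
      rw [card_compl]
      omega)
    have hcard_insert : ∀ x ∈ ({a, b} : Finset V), g x = -∑ y ∈ S, g y := by
      intro x hx
      have hxS : x ∉ S := fun h ↦ mem_compl.mp (hS h) hx
      have hsum := hg (insert x S) (by rw [card_insert_of_notMem hxS]; omega)
      rw [sum_insert hxS] at hsum
      exact eq_neg_of_add_eq_zero_left hsum
    rw [hcard_insert a (by simp), hcard_insert b (by simp)]
  ext a
  obtain ⟨A, -, hA⟩ := exists_subset_card_eq (s := (univ : Finset V)) (n := k) hkV.le
  have hsum := hg A hA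
  rw [sum_congr rfl fun x _ ↦ hconst x a, sum_const, hA] at hsum
  exact (smul_eq_zero_iff_right hk).mp hsum

/-- The down operator of the Boolean lattice: it turns a function of `(k + 1)`-sets into a function
of `k`-sets by summing over all one-element extensions. Functions are defined on sets of all sizes,
so that no index `k` is needed. -/
def sumInsert (F : Finset V → ℝ) (S : Finset V) : ℝ :=
  ∑ a ∈ Sᶜ, F (insert a S)

/-- The restriction of `F` to the one-element extensions of `S`, as a function of the added vertex,
with value `0` on the vertices of `S`. -/
def link (F : Finset V → ℝ) (S : Finset V) (a : V) : ℝ :=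
  if a ∈ S then 0 else F (insert a S)

variable (F : Finset V → ℝ)

theorem sum_link_mul (S : Finset V) (f : V → ℝ) :
    ∑ a, link F S a * f a = ∑ a ∈ Sᶜ, F (insert a S) * f a := by
  rw [← sum_subset (subset_univ Sᶜ) fun a _ ha ↦ by simp_all [link]]
  refine sum_congr rfl fun a ha ↦ ?_
  rw [link, if_neg (mem_compl.mp ha)]

theorem sum_link (S : Finset V) : ∑ a, link F S a = sumInsert F S := by
  simpa [sumInsert] using sum_link_mul F S 1

theorem sum_powersetCard_sumInsert (k : ℕ) :
    ∑ S ∈ powersetCard k univ, sumInsert F S =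
      (k + 1) * ∑ A ∈ powersetCard (k + 1) univ, F A := by
  simp only [sumInsert, sum_powersetCard_sum_compl_insert fun _ ↦ F, mul_sum]
  refine sum_congr rfl fun A hA ↦ ?_
  simp [mem_powersetCard_univ.mp hA]

theorem sum_powersetCard_link_dotProduct_self (k : ℕ) :
    ∑ S ∈ powersetCard k univ, link F S ⬝ᵥ link F S =
      (k + 1) * ∑ A ∈ powersetCard (k + 1) univ, F A ^ 2 := by
  rw [← sum_powersetCard_sumInsert]
  refine sum_congr rfl fun S _ ↦ ?_
  rw [dotProduct, sum_link_mul, sumInsert]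
  refine sum_congr rfl fun a ha ↦ ?_
  rw [link, if_neg (mem_compl.mp ha), sq]

end SubsetSums

section TokenLaplacian

open Equiv Matrix
open scoped Pointwise

variable {V : Type*} [Fintype V] [DecidableEq V]

theorem sumInsert_perm_smul (F : Finset V → ℝ) (σ : Perm V) (S : Finset V) :
    sumInsert F (σ • S) = sumInsert (fun A ↦ F (σ • A)) S := by
  simp only [sumInsert, smul_finset_insert]
  refine (sum_equiv σ (fun a ↦ ?_) fun _ _ ↦ rfl).symm
  rw [mem_compl, mem_compl, ← Perm.smul_def, smul_mem_smul_finset_iff]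

variable (G : SimpleGraph V) [DecidableRel G.Adj]

omit [DecidableEq V] in
theorem sum_sum_neighborFinset_comm {M : Type*} [AddCommMonoid M] (f : V → V → M) :
    ∑ a, ∑ b ∈ G.neighborFinset a, f a b = ∑ a, ∑ b ∈ G.neighborFinset a, f b a :=
  sum_comm' fun a b ↦ by simp [G.adj_comm]

/-- The Laplacian of all token graphs of `G` at once, acting on functions of vertex sets of
arbitrary size. Moving a token along an edge is encoded as the transposition of its endpoints, so
that edges with both or no endpoints in `A` contribute `0`; the factor `1 / 2` is there because
every edge is counted in both directions. -/
noncomputable def tokenLaplacian (F : Finset V → ℝ) (A : Finset V) : ℝ :=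
  (∑ a, ∑ b ∈ G.neighborFinset a, (F A - F (swap a b • A))) / 2

theorem tokenLaplacian_sumInsert (F : Finset V → ℝ) (S : Finset V) :
    tokenLaplacian G (sumInsert F) S = sumInsert (tokenLaplacian G F) S := by
  have hdiff : ∀ σ : Perm V, sumInsert F S - sumInsert F (σ • S) =
      ∑ x ∈ Sᶜ, (F (insert x S) - F (σ • insert x S)) := by
    intro σ
    rw [sumInsert_perm_smul, sumInsert, sumInsert, sum_sub_distrib]
  rw [sumInsert]
  simp only [tokenLaplacian, hdiff, ← sum_div, sum_comm (s := Sᶜ)]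

theorem tokenLaplacian_eq_sum_boundary (F : Finset V → ℝ) (A : Finset V) :
    tokenLaplacian G F A =
      ∑ a ∈ A, ∑ b ∈ G.neighborFinset a \ A, (F A - F (swap a b • A)) := by
  have hsplit : ∀ a b, F A - F (swap a b • A) =
      (if a ∈ A ∧ b ∉ A then F A - F (swap a b • A) else 0) +
        (if b ∈ A ∧ a ∉ A then F A - F (swap b a • A) else 0) := by
    intro a b
    rw [swap_comm b a]
    by_cases ha : a ∈ A <;> by_cases hb : b ∈ A <;>
      simp [ha, hb, swap_smul_finset_eq_self]
  have hboundary : ∑ a, ∑ b ∈ G.neighborFinset a,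
      (if a ∈ A ∧ b ∉ A then F A - F (swap a b • A) else 0) =
      ∑ a ∈ A, ∑ b ∈ G.neighborFinset a \ A, (F A - F (swap a b • A)) := by
    rw [← sum_subset (subset_univ A) fun a _ ha ↦ by simp [ha]]
    refine sum_congr rfl fun a ha ↦ ?_
    simp only [ha, true_and, sdiff_eq_filter, sum_filter]
  rw [tokenLaplacian, div_eq_iff two_ne_zero, mul_two, ← hboundary]
  conv_lhs => enter [2, a, 2, b]; rw [hsplit]
  simp only [sum_add_distrib]
  rw [← sum_sum_neighborFinset_comm G fun b a ↦
    if b ∈ A ∧ a ∉ A then F A - F (swap b a • A) else 0]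

theorem tokenLaplacian_singleton (F : Finset V → ℝ) (a : V) :
    tokenLaplacian G F {a} = ∑ b ∈ G.neighborFinset a, (F {a} - F {b}) := by
  rw [tokenLaplacian_eq_sum_boundary, sum_singleton, sdiff_singleton_eq_erase,
    erase_eq_of_notMem (G.notMem_neighborFinset_self a)]
  simp

theorem tokenLaplacian_sum (f : V → ℝ) (A : Finset V) :
    tokenLaplacian G (fun B ↦ ∑ x ∈ B, f x) A = ∑ x ∈ A, (G.lapMatrix ℝ *ᵥ f) x := by
  have hsmul : ∀ (σ : Perm V) (B : Finset V), ∑ x ∈ σ • B, f x = ∑ x ∈ B, f (σ x) := by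
    intro σ B
    exact sum_image σ.injective.injOn
  have hsingleton : ∀ x, (G.lapMatrix ℝ *ᵥ f) x = tokenLaplacian G (fun B ↦ ∑ y ∈ B, f y) {x} := by
    intro x
    simp [lapMatrix_mulVec_apply_eq_sum_sub, tokenLaplacian_singleton]
  simp only [hsingleton, tokenLaplacian, hsmul, sum_singleton, ← sum_div, ← sum_sub_distrib,
    sum_comm (s := A)]

theorem lapMatrix_mulVec_link (F : Finset V → ℝ) {S : Finset V} {a : V} (ha : a ∉ S) :
    (G.lapMatrix ℝ *ᵥ link F S) a =
      ∑ b ∈ G.neighborFinset a \ insert a S, (F (insert a S) - F (swap a b • insert a S)) +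
        #(G.neighborFinset a ∩ insert a S) * F (insert a S) := by
  rw [lapMatrix_mulVec_apply_eq_sum_sub, ← sum_inter_add_sum_sdiff _ (insert a S), add_comm]
  congr 1
  · refine sum_congr rfl fun b hb ↦ ?_
    have hbS : b ∉ S := fun h ↦ (mem_sdiff.mp hb).2 (mem_insert_of_mem h)
    rw [link, link, if_neg ha, if_neg hbS, swap_smul_insert_finset ha hbS]
  · rw [← nsmul_eq_mul, ← sum_const]
    refine sum_congr rfl fun b hb ↦ ?_
    obtain ⟨hab, hb⟩ := mem_inter.mp hb
    have hbS : b ∈ S := mem_of_mem_insert_of_ne hb ((G.mem_neighborFinset a b).mp hab).ne'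
    rw [link, link, if_neg ha, if_pos hbS, sub_zero]

theorem sum_card_neighborFinset_inter_le (A : Finset V) :
    ∑ a ∈ A, #(G.neighborFinset a ∩ A) ≤ #A * (#A - 1) := by
  refine sum_le_card_nsmul A _ _ fun a ha ↦ ?_
  rw [← card_erase_of_mem ha]
  refine card_le_card fun b hb ↦ ?_
  obtain ⟨hab, hb⟩ := mem_inter.mp hb
  exact mem_erase.mpr ⟨((G.mem_neighborFinset a b).mp hab).ne', hb⟩

theorem sum_powersetCard_link_dotProduct_lapMatrix_mulVec (F : Finset V → ℝ) (k : ℕ) :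
    ∑ S ∈ powersetCard k univ, link F S ⬝ᵥ G.lapMatrix ℝ *ᵥ link F S =
      ∑ A ∈ powersetCard (k + 1) univ, (F A * tokenLaplacian G F A +
        (∑ a ∈ A, #(G.neighborFinset a ∩ A) : ℕ) * F A ^ 2) := by
  have hlink : ∀ S : Finset V, link F S ⬝ᵥ G.lapMatrix ℝ *ᵥ link F S =
      ∑ a ∈ Sᶜ, F (insert a S) * (∑ b ∈ G.neighborFinset a \ insert a S,
        (F (insert a S) - F (swap a b • insert a S)) +
          #(G.neighborFinset a ∩ insert a S) * F (insert a S)) := by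
    intro S
    rw [dotProduct, sum_link_mul]
    exact sum_congr rfl fun a ha ↦ by
      rw [lapMatrix_mulVec_link G F (mem_compl.mp ha)]
  simp only [hlink]
  rw [sum_powersetCard_sum_compl_insert fun a A ↦ F A * (∑ b ∈ G.neighborFinset a \ A,
    (F A - F (swap a b • A)) + #(G.neighborFinset a ∩ A) * F A)]
  refine sum_congr rfl fun A _ ↦ ?_
  rw [← mul_sum, sum_add_distrib, ← tokenLaplacian_eq_sum_boundary, ← sum_mul, ← Nat.cast_sum]
  ring

theorem mul_sum_sq_le_sum_mul_tokenLaplacian {F : Finset V → ℝ} {k : ℕ}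
    (hF : ∀ S : Finset V, #S = k → sumInsert F S = 0) :
    (k + 1) * (algebraicConnectivity G - k) * ∑ A ∈ powersetCard (k + 1) univ, F A ^ 2 ≤
      ∑ A ∈ powersetCard (k + 1) univ, F A * tokenLaplacian G F A := by
  have hgap : algebraicConnectivity G * ∑ S ∈ powersetCard k univ, link F S ⬝ᵥ link F S ≤
      ∑ S ∈ powersetCard k univ, link F S ⬝ᵥ G.lapMatrix ℝ *ᵥ link F S := by
    rw [mul_sum]
    refine sum_le_sum fun S hS ↦ algebraicConnectivity_mul_dotProduct_self_le G ?_
    rw [sum_link, hF S (mem_powersetCard_univ.mp hS)]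
  have hinner : ∑ A ∈ powersetCard (k + 1) univ,
      ((∑ a ∈ A, #(G.neighborFinset a ∩ A) : ℕ) : ℝ) * F A ^ 2 ≤
      (k + 1) * k * ∑ A ∈ powersetCard (k + 1) univ, F A ^ 2 := by
    rw [mul_sum]
    refine sum_le_sum fun A hA ↦ mul_le_mul_of_nonneg_right ?_ (sq_nonneg _)
    have h := sum_card_neighborFinset_inter_le G A
    rw [mem_powersetCard_univ.mp hA, Nat.add_sub_cancel] at h
    exact_mod_cast h
  rw [sum_powersetCard_link_dotProduct_self, sum_powersetCard_link_dotProduct_lapMatrix_mulVec,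
    sum_add_distrib] at hgap
  linarith

theorem algebraicConnectivity_le_of_sumInsert_eq_zero {F : Finset V → ℝ} {k : ℕ} {μ : ℝ}
    (hk : (k + 1 : ℕ) ≤ algebraicConnectivity G)
    (hF : ∀ S : Finset V, #S = k → sumInsert F S = 0)
    (hμ : ∀ A : Finset V, #A = k + 1 → tokenLaplacian G F A = μ * F A)
    (hF0 : ∃ A : Finset V, #A = k + 1 ∧ F A ≠ 0) : algebraicConnectivity G ≤ μ := by
  obtain ⟨A, hA, hFA⟩ := hF0
  have hpos : 0 < ∑ A ∈ powersetCard (k + 1) univ, F A ^ 2 :=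
    sum_pos' (fun _ _ ↦ sq_nonneg _) ⟨A, mem_powersetCard_univ.mpr hA, by positivity⟩
  have henergy : ∑ A ∈ powersetCard (k + 1) univ, F A * tokenLaplacian G F A =
      μ * ∑ A ∈ powersetCard (k + 1) univ, F A ^ 2 := by
    rw [mul_sum]
    refine sum_congr rfl fun B hB ↦ ?_
    rw [hμ B (mem_powersetCard_univ.mp hB)]
    ring
  have hle := le_of_mul_le_mul_right
    (henergy ▸ mul_sum_sq_le_sum_mul_tokenLaplacian G hF) hpos
  push_cast at hk
  calc algebraicConnectivity G ≤ (k + 1) * (algebraicConnectivity G - k) := by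
        linarith [mul_nonneg k.cast_nonneg (sub_nonneg.mpr hk)]
    _ ≤ μ := hle

theorem algebraicConnectivity_le_of_tokenLaplacian_eq {F : Finset V → ℝ} {k : ℕ} {μ : ℝ}
    (hk : k ≤ algebraicConnectivity G)
    (hμ : ∀ A : Finset V, #A = k → tokenLaplacian G F A = μ * F A)
    (hsum : ∑ A ∈ powersetCard k univ, F A = 0)
    (hF0 : ∃ A : Finset V, #A = k ∧ F A ≠ 0) : algebraicConnectivity G ≤ μ := by
  induction k generalizing F with
  | zero =>
    obtain ⟨A, hA, hFA⟩ := hF0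
    rw [card_eq_zero.mp hA] at hFA
    simp [hFA] at hsum
  | succ k ih =>
    by_cases hF : ∀ S : Finset V, #S = k → sumInsert F S = 0
    · exact algebraicConnectivity_le_of_sumInsert_eq_zero G hk hF hμ hF0
    · refine ih ((Nat.cast_le.mpr k.le_succ).trans hk) (F := sumInsert F) (fun S hS ↦ ?_) ?_
        (by simpa using hF)
      · rw [tokenLaplacian_sumInsert, sumInsert, sumInsert, mul_sum]
        refine sum_congr rfl fun a ha ↦ hμ _ ?_
        rw [card_insert_of_notMem (mem_compl.mp ha), hS]
      · rw [sum_powersetCard_sumInsert, hsum, mul_zero]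

end TokenLaplacian

section TokenGraph

open Equiv Matrix
open scoped Pointwise symmDiff

variable {n k : ℕ} {G : SimpleGraph (Fin n)}

theorem tokenGraph_adj_iff {A B : {s : Finset (Fin n) // #s = k}} :
    (tokenGraph n k G).Adj A B ↔
      ∃ a ∈ A.1, ∃ b ∉ A.1, G.Adj a b ∧ B.1 = swap a b • A.1 := by
  rw [tokenGraph, SimpleGraph.fromRel_adj]
  constructor
  · rintro ⟨-, h⟩
    obtain ⟨u, v, huv, hsymm⟩ : ∃ u v, G.Adj u v ∧ A.1 ∆ B.1 = {u, v} :=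
      h.elim And.right fun h ↦ by simpa only [symmDiff_comm] using h.2
    have hB : B.1 = A.1 ∆ {u, v} := by rw [← hsymm, symmDiff_symmDiff_cancel_left]
    have hmem := mem_iff_notMem_of_card_symmDiff_pair (hB ▸ B.2.trans A.2.symm)
    by_cases hu : u ∈ A.1
    · have hv := hmem.mp hu
      exact ⟨u, hu, v, hv, huv, hB.trans (swap_smul_finset_eq_symmDiff hu hv).symm⟩
    · have hv := not_not.mp (mt hmem.mpr hu)
      refine ⟨v, hv, u, hu, huv.symm, ?_⟩
      rw [swap_smul_finset_eq_symmDiff hv hu, pair_comm, hB]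
  · rintro ⟨a, ha, b, hb, hab, hB⟩
    rw [swap_smul_finset_eq_symmDiff ha hb] at hB
    have hbB : b ∈ B.1 := by simp [hB, mem_symmDiff, hb]
    have hinter : A.1 ∩ B.1 = A.1.erase a := by
      rw [hB]
      grind [mem_symmDiff]
    refine ⟨fun h ↦ hb (h ▸ hbB), Or.inl ⟨?_, a, b, hab, ?_⟩⟩
    · rw [hinter, card_erase_of_mem ha, A.2]
    · rw [hB, symmDiff_symmDiff_cancel_left]

theorem lapMatrix_tokenGraph_mulVec [DecidableRel G.Adj] (F : Finset (Fin n) → ℝ)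
    (A : {s : Finset (Fin n) // #s = k}) :
    ((tokenGraph n k G).lapMatrix ℝ *ᵥ fun B ↦ F B.1) A = tokenLaplacian G F A.1 := by
  rw [lapMatrix_mulVec_apply_eq_sum_sub, tokenLaplacian_eq_sum_boundary, sum_sigma']
  refine (sum_bij (fun p _ ↦ ⟨swap p.1 p.2 • A.1, by rw [card_smul_finset, A.2]⟩) ?_ ?_ ?_
    fun _ _ ↦ rfl).symm
  · rintro ⟨a, b⟩ hab
    simp only [mem_sigma, mem_sdiff, SimpleGraph.mem_neighborFinset] at hab ⊢
    exact tokenGraph_adj_iff.mpr ⟨a, hab.1, b, hab.2.2, hab.2.1, rfl⟩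
  · rintro ⟨a, b⟩ hab ⟨c, d⟩ hcd h
    simp only [mem_sigma, mem_sdiff] at hab hcd
    obtain ⟨rfl, rfl⟩ := eq_and_eq_of_swap_smul_finset_eq hab.1 hab.2.2 hcd.1 hcd.2.2
      (congrArg Subtype.val h)
    rfl
  · intro B hB
    obtain ⟨a, ha, b, hb, hab, hB⟩ :=
      tokenGraph_adj_iff.mp ((SimpleGraph.mem_neighborFinset _ _ _).mp hB)
    exact ⟨⟨a, b⟩, by simp [ha, hb, hab], Subtype.ext hB.symm⟩

theorem sum_subtype_card_eq (F : Finset (Fin n) → ℝ) :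
    ∑ A : {s : Finset (Fin n) // #s = k}, F A.1 = ∑ A ∈ powersetCard k univ, F A :=
  (sum_subtype _ (fun _ ↦ mem_powersetCard_univ) F).symm

variable (G) [DecidableRel G.Adj]

theorem algebraicConnectivity_tokenGraph_le (hk : 1 ≤ k) (hkn : k < n) :
    algebraicConnectivity (tokenGraph n k G) ≤ algebraicConnectivity G := by
  have : Nontrivial (Fin n) := Fin.nontrivial_iff_two_le.mpr (by omega)
  obtain ⟨f, hf0, hf, hμ⟩ := exists_mulVec_eq_algebraicConnectivity_smul G
  let F : Finset (Fin n) → ℝ := fun A ↦ ∑ a ∈ A, f a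
  refine algebraicConnectivity_le_of_mulVec_eq_smul _ (f := fun A ↦ F A.1) ?_ ?_ ?_
  · rw [sum_subtype_card_eq, sum_powersetCard_sum_eq_zero hf]
  · contrapose! hf0
    exact eq_zero_of_forall_card_eq_sum_eq_zero (Nat.one_le_iff_ne_zero.mp hk)
      (by simpa using hkn) fun A hA ↦ congrFun hf0 ⟨A, hA⟩
  · ext A
    rw [lapMatrix_tokenGraph_mulVec, tokenLaplacian_sum, hμ, Pi.smul_apply, smul_sum]
    rfl

theorem algebraicConnectivity_le_tokenGraph (hk : 1 ≤ k) (hkn : k < n)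
    (hG : k ≤ algebraicConnectivity G) :
    algebraicConnectivity G ≤ algebraicConnectivity (tokenGraph n k G) := by
  have : Nontrivial {s : Finset (Fin n) // #s = k} := by
    have hpos := Nat.choose_pos hkn.le
    have hne := mt Nat.choose_eq_one_iff.mp (not_or.mpr ⟨by omega, hkn.ne'⟩)
    rw [← Fintype.one_lt_card_iff_nontrivial, Fintype.card_finset_len, Fintype.card_fin]
    omega
  obtain ⟨f, hf0, hf, hμ⟩ := exists_mulVec_eq_algebraicConnectivity_smul (tokenGraph n k G)
  obtain ⟨F, rfl⟩ : ∃ F : Finset (Fin n) → ℝ, (fun A ↦ F A.1) = f :=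
    ⟨Function.extend Subtype.val f 0, Function.extend_comp Subtype.val_injective f 0⟩
  refine algebraicConnectivity_le_of_tokenLaplacian_eq G hG (F := F) (fun A hA ↦ ?_) ?_ ?_
  · rw [← lapMatrix_tokenGraph_mulVec F ⟨A, hA⟩, hμ]
    rfl
  · rw [← sum_subtype_card_eq, hf]
  · obtain ⟨A, hA⟩ := Function.ne_iff.mp hf0
    exact ⟨A.1, A.2, hA⟩

end TokenGraph

theorem token_algebraic_connectivity_general (n k : ℕ) (G : SimpleGraph (Fin n))
    [DecidableRel G.Adj] (hk : 1 ≤ k) (hkn : k < n)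
    (h2 : lamSecond (SimpleGraph.posSemidef_lapMatrix ℝ G).isHermitian ≥ (k : ℝ)) :
    lamSecond (SimpleGraph.posSemidef_lapMatrix ℝ (tokenGraph n k G)).isHermitian =
      lamSecond (SimpleGraph.posSemidef_lapMatrix ℝ G).isHermitian :=
  le_antisymm (algebraicConnectivity_tokenGraph_le G hk hkn)
    (algebraicConnectivity_le_tokenGraph G hk hkn h2)

/-- If `λ₂(L(G)) ≥ k` for some `1 ≤ k ≤ ⌊n/2⌋`, then the algebraic connectivity of the
`k`-th token graph equals that of `G`: `λ₂(L_k(G)) = λ₂(L(G))`. -/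
theorem token_algebraic_connectivity (n k : ℕ) (G : SimpleGraph (Fin n))
    [DecidableRel G.Adj] (hk : 1 ≤ k) (hkn : k ≤ n / 2)
    (h2 : lamSecond (SimpleGraph.posSemidef_lapMatrix ℝ G).isHermitian ≥ (k : ℝ)) :
    lamSecond (SimpleGraph.posSemidef_lapMatrix ℝ (tokenGraph n k G)).isHermitian =
      lamSecond (SimpleGraph.posSemidef_lapMatrix ℝ G).isHermitian :=
  token_algebraic_connectivity_general n k G hk (by omega) h2
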